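/- arXiv:2411.14561 — 7 statements merged into one kernel-verified Lean document; each statement's English description precedes it below -/
import Mathlib

section
/- Let p ≥ 2 be an integer. For every real polynomial u of degree at most p, the Gauss–Lobatto interpolant satisfies ∫_{−1}^{1} (I_{p−1}u)(x)² dx ≤ (2 + 4/(2p−3)) ∫_{−1}^{1} u(x)² dx. -/
open Polynomial

/-- The `n`-th Legendre polynomial, given by the Rodrigues formula
`P_n(x) = 1/(2^n n!) dⁿ/dxⁿ (x² − 1)ⁿ`, normalized so that `P_n(1) = 1`. -/
noncomputable def legendre (n : ℕ) : Polynomial ℝ :=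
  Polynomial.C (1 / (2 ^ n * (n.factorial : ℝ))) *
    (⇑(Polynomial.derivative (R := ℝ)))^[n] ((Polynomial.X ^ 2 - 1) ^ n)

/-- The polynomial `χ_p(x) = P_{p−1}'(x) (x² − 1)`, whose roots are the `p`
Gauss–Lobatto nodes. -/
noncomputable def lobattoChi (p : ℕ) : Polynomial ℝ :=
  Polynomial.derivative (legendre (p - 1)) * (Polynomial.X ^ 2 - 1)


lemma glC2 : (C (2 : ℝ)) = 2 := rfl

lemma glC3 : (C (3 : ℝ)) = 3 := rfl

/-- Legendre-type differential identity for iterated derivatives. -/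
lemma gl_ode_aux (n : ℕ) (k : ℕ) :
    ((X : ℝ[X]) ^ 2 - 1) * derivative^[k + 2] (((X : ℝ[X]) ^ 2 - 1) ^ n)
      + (2 * ((k : ℝ[X]) + 1) - 2 * (n : ℝ[X])) * X * derivative^[k + 1] (((X : ℝ[X]) ^ 2 - 1) ^ n)
      + (((k : ℝ[X]) + 1) * (k : ℝ[X]) - 2 * (n : ℝ[X]) * ((k : ℝ[X]) + 1)) * derivative^[k] (((X : ℝ[X]) ^ 2 - 1) ^ n) = 0 := by
  induction k with
  | zero =>
    have h1 : ((X : ℝ[X]) ^ 2 - 1) * derivative (((X : ℝ[X]) ^ 2 - 1) ^ n)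
        = 2 * (n : ℝ[X]) * X * (((X : ℝ[X]) ^ 2 - 1) ^ n) := by
      rcases n with _ | n
      · simp
      · simp [derivative_pow, glC2]
        ring
    have h2 := congrArg derivative h1
    simp only [derivative_mul, derivative_sub, derivative_X_pow, derivative_one, derivative_X,
      derivative_natCast, derivative_ofNat] at h2
    simp [glC2] at h2 ⊢
    linear_combination h2
  | succ k ih =>
    have h2 := congrArg derivative ih
    simp only [derivative_mul, derivative_sub, derivative_add, derivative_X_pow, derivative_one,
      derivative_X, derivative_natCast, derivative_ofNat, derivative_zero,
      ← Function.iterate_succ_apply'] at h2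
    push_cast
    simp only [Function.iterate_succ_apply'] at h2 ⊢
    simp [glC2] at h2
    simp only [← Function.iterate_succ_apply, ← Function.iterate_succ_apply' derivative] at h2 ⊢
    linear_combination h2

lemma gl_ode (n : ℕ) :
    ((X : ℝ[X]) ^ 2 - 1) * derivative (derivative (legendre n)) + 2 * X * derivative (legendre n)
      = (n : ℝ[X]) * ((n : ℝ[X]) + 1) * legendre n := by
  have h := gl_ode_aux n n
  simp only [Function.iterate_succ_apply'] at h
  simp only [legendre, derivative_C_mul]
  linear_combination (C (1 / (2 ^ n * (n.factorial : ℝ)))) * h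

lemma gl_rec (m : ℕ) :
    derivative (legendre (m + 2)) = (2 * (m : ℝ[X]) + 3) * legendre (m + 1)
      + derivative (legendre m) := by
  have e : derivative (derivative (((X : ℝ[X]) ^ 2 - 1) ^ (m + 2))) =
      C (2 * ((m : ℝ) + 2) * (2 * m + 3)) * (((X : ℝ[X]) ^ 2 - 1) ^ (m + 1))
       + C (4 * ((m : ℝ) + 2) * (m + 1)) * (((X : ℝ[X]) ^ 2 - 1) ^ m) := by
    simp [derivative_pow]
    simp only [← C_ofNat, ← C_mul, ← C_add, ← C_eq_natCast, ← C_1]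
    simp only [C_ofNat, C_mul, C_add, C_eq_natCast, C_1]
    ring
  have e2 := congrArg (derivative^[m + 1]) e
  rw [iterate_map_add, iterate_derivative_C_mul, iterate_derivative_C_mul,
    ← Function.iterate_succ_apply, ← Function.iterate_succ_apply] at e2
  simp only [legendre, derivative_C_mul]
  rw [← Function.iterate_succ_apply' derivative, ← Function.iterate_succ_apply' derivative, e2]
  have hm : ((m.factorial : ℕ) : ℝ) ≠ 0 := by positivity
  have hm1 : ((m : ℝ) + 1) ≠ 0 := by positivity
  have hm2 : ((m : ℝ) + 2) ≠ 0 := by positivity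
  have c1 : C (1 / (2 ^ (m + 2) * ((m + 2).factorial : ℝ))) *
     C (2 * ((m : ℝ) + 2) * (2 * m + 3)) = (2 * (m : ℝ[X]) + 3) *
       C (1 / (2 ^ (m + 1) * ((m + 1).factorial : ℝ))) := by
    have : (2 * (m : ℝ[X]) + 3) = C (2 * (m : ℝ) + 3) := by simp [glC2, glC3]
    rw [this, ← C_mul, ← C_mul]
    congr 1
    simp only [Nat.factorial_succ]
    push_cast
    field_simp
    ring
  have c2 : C (1 / (2 ^ (m + 2) * ((m + 2).factorial : ℝ))) *
     C (4 * ((m : ℝ) + 2) * (m + 1)) = 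
       C (1 / (2 ^ m * (m.factorial : ℝ))) := by
    rw [← C_mul]
    congr 1
    simp only [Nat.factorial_succ]
    push_cast
    field_simp
    ring
  linear_combination derivative^[m + 1] (((X : ℝ[X]) ^ 2 - 1) ^ (m + 1)) * c1
    + derivative^[m + 1] (((X : ℝ[X]) ^ 2 - 1) ^ m) * c2

lemma gl_zero : legendre 0 = 1 := by simp [legendre]

lemma gl_one : legendre 1 = X := by
  simp only [legendre]
  simp
  have : (C (2⁻¹ : ℝ)) * 2 = 1 := by rw [← glC2, ← C_mul]; norm_num
  linear_combination (X : ℝ[X]) * this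

lemma gl_deriv_one (n : ℕ) :
    2 * (derivative (legendre n)).eval 1 = n * (n + 1) * (legendre n).eval 1 := by
  have := congrArg (eval 1) (gl_ode n)
  simpa using this

lemma gl_deriv_neg_one (n : ℕ) :
    -2 * (derivative (legendre n)).eval (-1) = n * (n + 1) * (legendre n).eval (-1) := by
  have := congrArg (eval (-1)) (gl_ode n)
  simpa using this

lemma gl_eval_one (n : ℕ) : (legendre n).eval 1 = 1 := by
  induction n using Nat.twoStepInduction with
  | zero => simp [gl_zero]
  | one => simp [gl_one]
  | more m h0 h1 =>
    have a := congrArg (eval 1) (gl_rec m)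
    have b0 := gl_deriv_one m
    have b2 := gl_deriv_one (m + 2)
    simp at a
    push_cast at b2
    rw [h1] at a
    rw [h0] at b0
    have : ((m : ℝ) + 2) * (m + 3) ≠ 0 := by positivity
    apply mul_left_cancel₀ this
    linear_combination 2 * a + b0 - b2

lemma gl_eval_neg_one (n : ℕ) : (legendre n).eval (-1) = (-1) ^ n := by
  induction n using Nat.twoStepInduction with
  | zero => simp [gl_zero]
  | one => simp [gl_one]
  | more m h0 h1 =>
    have a := congrArg (eval (-1)) (gl_rec m)
    have b0 := gl_deriv_neg_one m
    have b2 := gl_deriv_neg_one (m + 2)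
    simp at a
    push_cast at b2
    rw [h1] at a
    rw [h0] at b0
    have : ((m : ℝ) + 2) * (m + 3) ≠ 0 := by positivity
    apply mul_left_cancel₀ this
    linear_combination (-2) * a + b0 - b2

/-- `χ` in terms of Legendre polynomials. -/
lemma gl_chi (m : ℕ) :
    (2 * (m : ℝ[X]) + 3) * (derivative (legendre (m + 1)) * (X ^ 2 - 1)) =
      ((m : ℝ[X]) + 1) * ((m : ℝ[X]) + 2) * (legendre (m + 2) - legendre m) := by
  have hd : derivative ((2 * (m : ℝ[X]) + 3) * (derivative (legendre (m + 1)) * (X ^ 2 - 1)) -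
      ((m : ℝ[X]) + 1) * ((m : ℝ[X]) + 2) * (legendre (m + 2) - legendre m)) = 0 := by
    have h1 := gl_ode (m + 1)
    have h2 := gl_rec m
    simp only [derivative_mul, derivative_sub, derivative_add, derivative_X_pow, derivative_one,
      derivative_X, derivative_natCast, derivative_ofNat, derivative_zero]
    push_cast at h1
    simp [glC2]
    linear_combination (2 * (m : ℝ[X]) + 3) * h1 - ((m : ℝ[X]) + 1) * ((m : ℝ[X]) + 2) * h2
  have hc := eq_C_of_derivative_eq_zero hd
  have he := congrArg (eval 1) hc
  simp only [eval_C] at he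
  rw [← he] at hc
  simp [gl_eval_one] at hc
  linear_combination hc

/-- integration over `[-1,1]` as a linear functional. -/
noncomputable def glL : ℝ[X] →ₗ[ℝ] ℝ where
  toFun f := ∫ x in (-1 : ℝ)..1, f.eval x
  map_add' f g := by
    simp only [eval_add]
    exact intervalIntegral.integral_add (f.continuous.intervalIntegrable _ _)
      (g.continuous.intervalIntegrable _ _)
  map_smul' c f := by
    simp

lemma glL_def (f : ℝ[X]) : glL f = ∫ x in (-1 : ℝ)..1, f.eval x := rfl

lemma glL_C_mul (c : ℝ) (f : ℝ[X]) : glL (C c * f) = c * glL f := by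
  rw [← smul_eq_C_mul, map_smul, smul_eq_mul]

lemma glL_deriv (f : ℝ[X]) : glL (derivative f) = f.eval 1 - f.eval (-1) := by
  rw [glL_def]
  exact intervalIntegral.integral_eq_sub_of_hasDerivAt (fun x _ => f.hasDerivAt x)
    ((derivative f).continuous.intervalIntegrable _ _)

lemma glL_parts (f : ℝ[X]) (k : ℕ) (h1 : ∀ j < k, (derivative^[j] f).eval 1 = 0)
    (h2 : ∀ j < k, (derivative^[j] f).eval (-1) = 0) (q : ℝ[X]) :
    glL (derivative^[k] f * q) = (-1) ^ k * glL (f * derivative^[k] q) := by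
  induction k generalizing q with
  | zero => simp
  | succ k ih =>
    have h := glL_deriv (derivative^[k] f * q)
    rw [derivative_mul, map_add, eval_mul, eval_mul, h1 k (by omega), h2 k (by omega),
      ← Function.iterate_succ_apply' derivative] at h
    have h' := ih (fun j hj => h1 j (by omega)) (fun j hj => h2 j (by omega)) (derivative q)
    rw [← Function.iterate_succ_apply] at h'
    rw [pow_succ]
    linear_combination h - h'

lemma gl_orth (n : ℕ) (q : ℝ[X]) (hq : q.natDegree < n) : glL (legendre n * q) = 0 := by
  have hb : ∀ x : ℝ, x ^ 2 = 1 → ∀ j < n, (derivative^[j] (((X : ℝ[X]) ^ 2 - 1) ^ n)).eval x = 0 := by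
    intro x hx j hj
    have hd := pow_sub_dvd_iterate_derivative_pow ((X : ℝ[X]) ^ 2 - 1) n j
    obtain ⟨g, hg⟩ := hd
    rw [hg]
    have : n - j ≠ 0 := by omega
    simp [hx, this]
  rw [legendre, mul_assoc, glL_C_mul, glL_parts _ n (hb 1 (by norm_num)) (hb (-1) (by norm_num)),
    iterate_derivative_eq_zero hq]
  simp

lemma gl_natDegree_le (n : ℕ) : (legendre n).natDegree ≤ n := by
  rw [legendre]
  refine (natDegree_C_mul_le _ _).trans ((natDegree_iterate_derivative _ _).trans ?_)
  have : (((X : ℝ[X]) ^ 2 - 1) ^ n).natDegree ≤ n * 2 := by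
    refine natDegree_pow_le_of_le n ?_
    compute_degree
  omega

lemma gl_norm (n : ℕ) : glL (legendre n * legendre n) = 2 / (2 * n + 1) := by
  rcases n with _ | m
  · simp [gl_zero, glL_def]; norm_num
  · have h := glL_deriv (legendre (m + 1) * legendre (m + 2))
    have hlt : (derivative (legendre (m + 1))).natDegree < m + 2 :=
      lt_of_le_of_lt (natDegree_derivative_le _) (by have := gl_natDegree_le (m + 1); omega)
    have hlt2 : (derivative (legendre m)).natDegree < m + 1 :=
      lt_of_le_of_lt (natDegree_derivative_le _) (by have := gl_natDegree_le m; omega)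
    have o1 := gl_orth _ _ hlt
    have o2 := gl_orth _ _ hlt2
    rw [derivative_mul, gl_rec, mul_add, map_add, map_add, mul_comm _ (legendre (m + 2)), o1, o2,
      eval_mul, eval_mul, gl_eval_one, gl_eval_one, gl_eval_neg_one, gl_eval_neg_one] at h
    have e : legendre (m + 1) * ((2 * (m : ℝ[X]) + 3) * legendre (m + 1)) =
        C (2 * (m : ℝ) + 3) * (legendre (m + 1) * legendre (m + 1)) := by
      simp [glC2, glC3]; ring
    rw [e, glL_C_mul] at h
    have hs : ((-1 : ℝ) ^ (m + 1)) * (-1) ^ (m + 2) = -1 := by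
      rw [← pow_add]
      exact Odd.neg_one_pow ⟨m + 1, by ring⟩
    rw [hs] at h
    push_cast
    rw [eq_div_iff (by positivity)]
    linear_combination h

lemma gl_splits_deriv (f : ℝ[X]) (hf : f.Splits) : (derivative f).Splits := by
  by_cases h0 : f.natDegree = 0
  · rw [eq_C_of_natDegree_eq_zero h0]; simp
  rw [splits_iff_card_roots] at *
  have h1 := card_roots_le_derivative f
  have h2 := card_roots' (derivative f)
  have h3 := natDegree_derivative_lt h0
  omega

lemma gl_splits (n : ℕ) : (derivative (legendre n)).Splits := by
  apply gl_splits_deriv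
  rw [legendre]
  refine Splits.C_mul ?_ _
  have : ∀ k, (derivative^[k] (((X : ℝ[X]) ^ 2 - 1) ^ n)).Splits := by
    intro k
    induction k with
    | zero =>
      have : ((X : ℝ[X]) ^ 2 - 1) = (X - C 1) * (X - C (-1)) := by simp; ring
      simp only [Function.iterate_zero, id]
      rw [this]
      exact ((Splits.X_sub_C _).mul (Splits.X_sub_C _)).pow n
    | succ k ih =>
      rw [Function.iterate_succ_apply']
      exact gl_splits_deriv _ ih
  exact this n

lemma gl_pos (g : ℝ[X]) (hg : glL ((X ^ 2 - 1) * g ^ 2) = 0) : g = 0 := by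
  by_contra hne
  have hc : Continuous fun x : ℝ => ((1 - X ^ 2) * g ^ 2).eval x := Polynomial.continuous _
  have hnn : ∀ x ∈ Set.Ioc (-1 : ℝ) 1, 0 ≤ ((1 - X ^ 2) * g ^ 2).eval x := by
    intro x hx
    simp only [eval_mul, eval_sub, eval_one, eval_pow, eval_X]
    exact mul_nonneg (by nlinarith [hx.1, hx.2]) (sq_nonneg _)
  have hex : ∃ c ∈ Set.Ioo (-1 : ℝ) 1, g.eval c ≠ 0 := by
    by_contra hcon
    push Not at hcon
    exact hne (eq_zero_of_infinite_isRoot g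
      ((Set.Ioo_infinite (by norm_num : (-1 : ℝ) < 1)).mono fun x hx => hcon x hx))
  obtain ⟨c, hc1, hc2⟩ := hex
  have := intervalIntegral.integral_pos (by norm_num : (-1 : ℝ) < 1) hc.continuousOn hnn
    ⟨c, ⟨hc1.1.le, hc1.2.le⟩, by
      simp only [eval_mul, eval_sub, eval_one, eval_pow, eval_X]
      exact mul_pos (by nlinarith [hc1.1, hc1.2]) (by positivity)⟩
  rw [← glL_def] at this
  have e : (1 - X ^ 2) * g ^ 2 = -((X ^ 2 - 1) * g ^ 2) := by ring
  rw [e, map_neg, hg] at this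
  simp at this

lemma gl_chi' (m : ℕ) : ∃ k : ℝ, k ≠ 0 ∧
    derivative (legendre (m + 1)) * (X ^ 2 - 1) = C k * (legendre (m + 2) - legendre m) := by
  have h3 : (2 * (m : ℝ) + 3) ≠ 0 := by positivity
  refine ⟨((m : ℝ) + 1) * (m + 2) / (2 * m + 3), by positivity, ?_⟩
  have h := gl_chi m
  have hc : (C (2 * (m : ℝ) + 3)) ≠ 0 := C_ne_zero.2 h3
  apply mul_left_cancel₀ hc
  rw [← mul_assoc (C _) (C _), ← C_mul, mul_div_cancel₀ _ h3]
  simpa [glC2, glC3] using h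

lemma gl_ne (n : ℕ) (hn : n ≠ 0) : derivative (legendre n) ≠ 0 := by
  intro h
  have := gl_deriv_one n
  rw [h, gl_eval_one] at this
  have h1 : (n : ℝ) ≠ 0 := by exact_mod_cast hn
  have h2 : (n : ℝ) * (n + 1) * 1 ≠ 0 := by positivity
  apply h2
  rw [← this]
  simp

lemma gl_nodup (m : ℕ) : (derivative (legendre (m + 1)) * (X ^ 2 - 1)).roots.Nodup := by
  have hq := gl_ne (m + 1) (by omega)
  have hX : ((X : ℝ[X]) ^ 2 - 1) = (X - C 1) * (X - C (-1)) := by simp; ring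
  have hXne : ((X : ℝ[X]) - C 1) * (X - C (-1)) ≠ 0 :=
    mul_ne_zero (X_sub_C_ne_zero _) (X_sub_C_ne_zero _)
  have hr1 : (derivative (legendre (m + 1))).eval 1 ≠ 0 := by
    have := gl_deriv_one (m + 1)
    rw [gl_eval_one] at this
    intro h
    rw [h] at this
    push_cast at this
    have : 0 < ((m : ℝ) + 1) * (m + 1 + 1) := by positivity
    linarith
  have hr2 : (derivative (legendre (m + 1))).eval (-1) ≠ 0 := by
    have := gl_deriv_neg_one (m + 1)
    rw [gl_eval_neg_one] at this
    intro h
    rw [h] at this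
    push_cast at this
    have h' : ((m : ℝ) + 1) * (m + 1 + 1) * (-1) ^ (m + 1) ≠ 0 := by positivity
    apply h'
    linarith
  have hqn : (derivative (legendre (m + 1))).roots.Nodup := by
    rw [Multiset.nodup_iff_count_le_one]
    intro r
    rw [count_roots]
    by_contra hcon
    have hd : (X - C r) ^ 2 ∣ derivative (legendre (m + 1)) :=
      (le_rootMultiplicity_iff hq).1 (by omega)
    obtain ⟨s, hs⟩ := hd
    have hs0 : s ≠ 0 := by rintro rfl; rw [mul_zero] at hs; exact hq hs
    have hdeg : s.natDegree + 2 ≤ m := by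
      have h1 := natDegree_derivative_le (legendre (m + 1))
      have h2 := gl_natDegree_le (m + 1)
      rw [hs, natDegree_mul (pow_ne_zero _ (X_sub_C_ne_zero _)) hs0, natDegree_pow,
        natDegree_X_sub_C] at h1
      omega
    obtain ⟨k, hk, hchi⟩ := gl_chi' m
    have hz : glL ((derivative (legendre (m + 1)) * (X ^ 2 - 1)) * s) = 0 := by
      rw [hchi, mul_assoc, glL_C_mul, sub_mul, map_sub, gl_orth _ _ (by omega),
        gl_orth _ _ (by omega)]
      simp
    have := gl_pos ((X - C r) * s) (by rw [← hz, hs]; congr 1; ring)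
    exact mul_ne_zero (X_sub_C_ne_zero _) hs0 this
  rw [hX, roots_mul (mul_ne_zero hq hXne), roots_mul hXne, roots_X_sub_C, roots_X_sub_C,
    Multiset.nodup_add]
  refine ⟨hqn, ?_, ?_⟩
  · rw [Multiset.nodup_add]
    refine ⟨Multiset.nodup_singleton _, Multiset.nodup_singleton _, ?_⟩
    rw [Multiset.disjoint_singleton]
    simp; norm_num
  · rw [Multiset.disjoint_right]
    intro a ha hmem
    rw [mem_roots hq, IsRoot.def] at hmem
    simp at ha
    rcases ha with rfl | rfl
    · exact hr1 hmem
    · exact hr2 hmem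

lemma gl_diff (m : ℕ) (d : ℝ[X]) (hd : d.natDegree ≤ m + 2)
    (h : ∀ x : ℝ, (derivative (legendre (m + 1)) * (X ^ 2 - 1)).eval x = 0 → d.eval x = 0) :
    ∃ a : ℝ, d = C a * (legendre (m + 2) - legendre m) := by
  by_cases hd0 : d = 0
  · exact ⟨0, by simp [hd0]⟩
  obtain ⟨k, hk, hchi⟩ := gl_chi' m
  have hnd := gl_nodup m
  have hX : ((X : ℝ[X]) ^ 2 - 1) = (X - C 1) * (X - C (-1)) := by simp; ring
  have hsp : (derivative (legendre (m + 1)) * ((X : ℝ[X]) ^ 2 - 1)).Splits := by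
    rw [hX]
    exact (gl_splits _).mul ((Splits.X_sub_C _).mul (Splits.X_sub_C _))
  have hne : derivative (legendre (m + 1)) * ((X : ℝ[X]) ^ 2 - 1) ≠ 0 := by
    rw [hX]
    exact mul_ne_zero (gl_ne _ (by omega))
      (mul_ne_zero (X_sub_C_ne_zero _) (X_sub_C_ne_zero _))
  have hdvd : derivative (legendre (m + 1)) * ((X : ℝ[X]) ^ 2 - 1) ∣ d := by
    apply hsp.dvd_of_roots_le_roots hne
    rw [Multiset.le_iff_subset hnd]
    intro x hx
    rw [mem_roots hne] at hx
    rw [mem_roots hd0]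
    exact h x hx
  have hdeg : m + 2 ≤ (derivative (legendre (m + 1)) * ((X : ℝ[X]) ^ 2 - 1)).natDegree := by
    by_contra hlt
    have o := gl_orth (m + 2) _ (not_le.1 hlt)
    have e : legendre (m + 2) * (C k * (legendre (m + 2) - legendre m)) =
      C k * (legendre (m + 2) * legendre (m + 2) - legendre (m + 2) * legendre m) := by ring
    rw [hchi, e, glL_C_mul, map_sub, gl_norm,
      gl_orth _ (legendre m) (by have := gl_natDegree_le m; omega), sub_zero] at o
    have : 0 < 2 / (2 * ((m + 2 : ℕ) : ℝ) + 1) := by positivity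
    rcases mul_eq_zero.1 o with h | h
    · exact hk h
    · linarith
  obtain ⟨t, ht⟩ := hdvd
  have ht0 : t ≠ 0 := by rintro rfl; simp at ht; exact hd0 ht
  have : t.natDegree = 0 := by
    rw [ht, natDegree_mul hne ht0] at hd
    omega
  rw [eq_C_of_natDegree_eq_zero this, hchi] at ht
  refine ⟨k * t.coeff 0, ?_⟩
  rw [ht, C_mul]
  ring

theorem gauss_lobatto_interp_l2_stability (p : ℕ) (hp : 2 ≤ p)
    (u v : Polynomial ℝ) (hu : u.natDegree ≤ p) (hv : v.natDegree ≤ p - 1)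
    (hinterp : ∀ x : ℝ, (lobattoChi p).eval x = 0 → v.eval x = u.eval x) :
    ∫ x in (-1 : ℝ)..1, v.eval x ^ 2 ≤
      (2 + 4 / (2 * (p : ℝ) - 3)) * ∫ x in (-1 : ℝ)..1, u.eval x ^ 2 := by
  obtain ⟨m, rfl⟩ : ∃ m, p = m + 2 := ⟨p - 2, by omega⟩
  obtain ⟨a, ha⟩ := gl_diff m (v - u)
    ((natDegree_sub_le _ _).trans (max_le (by omega) hu)) (by
      intro x hx
      rw [eval_sub, hinterp x (by simpa [lobattoChi] using hx), sub_self])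
  have hI : ∀ f : ℝ[X], ∫ x in (-1 : ℝ)..1, f.eval x ^ 2 = glL (f * f) := by
    intro f; simp [glL_def, sq]
  rw [hI, hI]
  have hvQ : glL (legendre (m + 2) * v) = 0 := gl_orth _ _ (by omega)
  have hQR : glL (legendre (m + 2) * legendre m) = 0 :=
    gl_orth _ _ (by have := gl_natDegree_le m; omega)
  have hQ := gl_norm (m + 2)
  have hR := gl_norm m
  have hv' : v = u + C a * (legendre (m + 2) - legendre m) := by rw [← ha]; ring
  set Q := legendre (m + 2)
  set R := legendre m
  set N : ℝ := 2 / (2 * ((m + 2 : ℕ) : ℝ) + 1) with hN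
  set M : ℝ := 2 / (2 * (m : ℝ) + 1) with hM
  have hMpos : 0 < M := by positivity
  have hNpos : 0 < N := by positivity
  have hconst : (2 + 4 / (2 * ((m + 2 : ℕ) : ℝ) - 3)) = 1 + M / N := by
    have h1 : 2 * ((m + 2 : ℕ) : ℝ) - 3 = 2 * m + 1 := by push_cast; ring
    rw [h1, hM, hN]
    push_cast
    field_simp
    ring
  rw [hconst]
  have huQ : glL (Q * u) = -a * N := by
    have e : Q * v = Q * u + C a * (Q * Q) - C a * (Q * R) := by rw [hv']; ring
    rw [e, map_sub, map_add, glL_C_mul, glL_C_mul, hQ, hQR] at hvQ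
    linarith
  obtain ⟨b, hb⟩ : ∃ b, glL (R * u) = b * M := ⟨glL (R * u) / M, by field_simp⟩
  have hvv : glL (v * v) = glL (u * u) - a ^ 2 * N - 2 * a * b * M + a ^ 2 * M := by
    have e : v * v = u * u + C (2 * a) * (Q * u) - C (2 * a) * (R * u) + C (a ^ 2) * (Q * Q)
        + C (a ^ 2) * (R * R) - C (2 * a ^ 2) * (Q * R) := by
      rw [hv']; simp [glC2]; ring
    rw [e]
    simp only [map_sub, map_add, glL_C_mul, hQ, hR, hQR, huQ, hb]
    ring
  have hbes : a ^ 2 * N + b ^ 2 * M ≤ glL (u * u) := by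
    have h0 : 0 ≤ glL ((u + C a * Q - C b * R) * (u + C a * Q - C b * R)) := by
      rw [← hI]
      exact intervalIntegral.integral_nonneg (by norm_num) (fun x _ => sq_nonneg _)
    have e : (u + C a * Q - C b * R) * (u + C a * Q - C b * R) =
        u * u + C (2 * a) * (Q * u) - C (2 * b) * (R * u) + C (a ^ 2) * (Q * Q)
        + C (b ^ 2) * (R * R) - C (2 * a * b) * (Q * R) := by
      simp [glC2]; ring
    rw [e] at h0
    simp only [map_sub, map_add, glL_C_mul, hQ, hR, hQR, huQ, hb] at h0
    linarith
  have hmul := mul_le_mul_of_nonneg_left hbes (div_pos hMpos hNpos).le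
  have hsq : 0 ≤ (a * N + b * M) ^ 2 / N := by positivity
  have e1 : M / N * (a ^ 2 * N + b ^ 2 * M) = a ^ 2 * M + b ^ 2 * M ^ 2 / N := by
    field_simp
  have e2 : (a * N + b * M) ^ 2 / N = a ^ 2 * N + 2 * a * b * M + b ^ 2 * M ^ 2 / N := by
    field_simp
    ring
  rw [hvv]
  rw [e1] at hmul
  rw [e2] at hsq
  linarith
end

section
/- Let p ≥ 2 be an integer. For every real polynomial u of degree at most p, the Gauss–Lobatto interpolation error satisfies ∫_{−1}^{1} (u(x) − (I_{p−1}u)(x))² dx ≤ (2/(4p² − 4p − 3)) ∫_{−1}^{1} (u'(x))² dx. -/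
open Polynomial

open MeasureTheory

lemma gl_iter_X (f : ℝ[X]) (k : ℕ) : derivative^[k+1] (X * f) =
    X * derivative^[k+1] f + C ((k:ℝ)+1) * derivative^[k] f := by
  induction k with
  | zero => simp; ring
  | succ k ih =>
    rw [Function.iterate_succ_apply', ih]
    simp only [Function.iterate_succ_apply', derivative_add, derivative_mul, derivative_X, derivative_C]
    simp only [map_add, map_one, Nat.cast_succ]
    ring

lemma gl_iter_X2 (f : ℝ[X]) (k : ℕ) : derivative^[k+2] ((X^2-1) * f) =
    (X^2-1) * derivative^[k+2] f + C (2*((k:ℝ)+2)) * X * derivative^[k+1] f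
      + C (((k:ℝ)+2)*(k+1)) * derivative^[k] f := by
  induction k with
  | zero =>
    simp only [Function.iterate_succ_apply', Function.iterate_zero_apply, derivative_add, derivative_sub, derivative_mul, derivative_X_pow, derivative_one]
    simp [map_ofNat]; ring
  | succ k ih =>
    rw [show k+1+2 = (k+2)+1 from rfl, Function.iterate_succ_apply', ih]
    simp only [Function.iterate_succ_apply', derivative_add, derivative_sub, derivative_mul, derivative_X_pow, derivative_one, derivative_X, derivative_C]
    simp only [map_add, map_mul, map_one, map_ofNat, Nat.cast_succ]
    simp [map_ofNat]
    ring

lemma gl_ode0 (m : ℕ) : derivative ((X^2-1) * derivative (derivative^[m+1] ((X^2-1 : ℝ[X])^(m+1))))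
    = C (((m:ℝ)+1)*(m+2)) * derivative^[m+1] ((X^2-1 : ℝ[X])^(m+1)) := by
  set w : ℝ[X] := (X^2-1 : ℝ[X])^(m+1) with hw
  have h1 : (X^2-1) * derivative w = X * (C (2*((m:ℝ)+1)) * w) := by
    rw [hw, derivative_pow_succ]
    simp [map_ofNat]
    ring
  have h2 : derivative^[m+2] ((X^2-1) * derivative w) = derivative^[m+2] (X * (C (2*((m:ℝ)+1)) * w)) := by
    rw [h1]
  rw [gl_iter_X2, gl_iter_X, iterate_derivative_C_mul, iterate_derivative_C_mul] at h2
  simp only [← Function.iterate_succ_apply] at h2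
  simp only [Function.iterate_succ_apply', derivative_mul, derivative_sub, derivative_X_pow, derivative_one] at h2 ⊢
  simp only [map_add, map_mul, map_one, map_ofNat, Nat.cast_succ] at h2 ⊢
  simp [map_ofNat] at h2 ⊢
  linear_combination h2

lemma gl_int (F : ℝ[X]) : ∫ x in (-1:ℝ)..1, (derivative F).eval x = F.eval 1 - F.eval (-1) :=
  intervalIntegral.integral_eq_sub_of_hasDerivAt (fun x _ => F.hasDerivAt x)
    ((derivative F).continuous.intervalIntegrable _ _)

lemma gl_orth_s7 (n : ℕ) (k : ℕ) (hk : k ≤ n) : ∀ q : ℝ[X], derivative^[k] q = 0 →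
    ∫ x in (-1:ℝ)..1, (q * derivative^[k] ((X^2-1 : ℝ[X])^n)).eval x = 0 := by
  induction k with
  | zero => intro q hq; simp at hq; simp [hq]
  | succ k ih =>
    intro q hq
    have h := ih (by omega) (derivative q) hq
    have hF := gl_int (q * derivative^[k] ((X^2-1 : ℝ[X])^n))
    have hd : (X^2-1 : ℝ[X]) ∣ derivative^[k] ((X^2-1 : ℝ[X])^n) :=
      (dvd_pow_self _ (by omega)).trans (pow_sub_dvd_iterate_derivative_pow _ n k)
    obtain ⟨r, hr⟩ := hd
    have hb : (q * derivative^[k] ((X^2-1 : ℝ[X])^n)).eval 1 - (q * derivative^[k] ((X^2-1 : ℝ[X])^n)).eval (-1) = 0 := by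
      rw [hr]; simp
    rw [hb, derivative_mul] at hF
    simp only [eval_add] at hF
    rw [intervalIntegral.integral_add ((Polynomial.continuous _).intervalIntegrable _ _) ((Polynomial.continuous _).intervalIntegrable _ _), h, zero_add] at hF
    rw [Function.iterate_succ_apply']
    exact hF

/-- norm identity -/
lemma gl_norm_s7 (c P : ℝ[X]) (N : ℝ) (hc : c = (X^2-1) * derivative P) (h : derivative c = C N * P) :
    2 * ∫ x in (-1:ℝ)..1, (derivative c * derivative c).eval x =
     (4*N-3) * ∫ x in (-1:ℝ)..1, (c*c).eval x := by
  have h2 : (X^2-1) * derivative (derivative c) = C N * c := by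
    rw [h, derivative_C_mul, hc]; ring
  have h3 : derivative (X * (X^2-1) * derivative c * derivative c - C N * (X * c * c)
      - 3 * ((X^2-1) * c * derivative c) + 3 * (X*c*c)) =
      C 2 * (derivative c * derivative c) - C (4*N-3) * (c*c) := by
    have e1 : derivative (3 : ℝ[X]) = 0 := derivative_ofNat 3
    simp only [derivative_mul, derivative_add, derivative_sub, derivative_X, derivative_X_pow, derivative_one, derivative_C, e1]
    simp only [map_sub, map_mul, map_ofNat]
    simp [map_ofNat]
    linear_combination (2 * X * derivative c - 3 * c) * h2
  have h4 := gl_int (X * (X^2-1) * derivative c * derivative c - C N * (X * c * c)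
      - 3 * ((X^2-1) * c * derivative c) + 3 * (X*c*c))
  have hc1 : c.eval 1 = 0 := by rw [hc]; simp
  have hc2 : c.eval (-1) = 0 := by rw [hc]; simp
  rw [h3] at h4
  simp only [eval_sub, eval_C_mul] at h4
  rw [intervalIntegral.integral_sub (((Polynomial.continuous _).const_mul _).intervalIntegrable _ _)
    (((Polynomial.continuous _).const_mul _).intervalIntegrable _ _),
    intervalIntegral.integral_const_mul, intervalIntegral.integral_const_mul] at h4
  simp [hc1, hc2] at h4
  simp
  linarith

lemma gl_deg (f : ℝ[X]) (k : ℕ) : (derivative^[k] f).natDegree = f.natDegree - k := by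
  induction k with
  | zero => simp
  | succ k ih => rw [Function.iterate_succ_apply', natDegree_derivative, ih]; omega

lemma gl_roots (f : ℝ[X]) (k : ℕ) : f.roots.card ≤ (derivative^[k] f).roots.card + k := by
  induction k with
  | zero => simp
  | succ k ih =>
    rw [Function.iterate_succ_apply']
    have := card_roots_le_derivative (derivative^[k] f)
    omega

lemma gl_wroots (n : ℕ) : (((X^2-1 : ℝ[X])^n).roots).card = 2 * n := by
  have : (X^2-1 : ℝ[X]) = (X - C 1) * (X - C (-1)) := by simp; ring
  rw [roots_pow, this, roots_mul (mul_ne_zero (X_sub_C_ne_zero _) (X_sub_C_ne_zero _)), roots_X_sub_C, roots_X_sub_C]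
  simp; ring

lemma gl_wdeg (n : ℕ) : ((X^2-1 : ℝ[X])^n).natDegree = 2 * n := by
  have : (X^2-1 : ℝ[X]).natDegree = 2 := by compute_degree!
  rw [natDegree_pow, this]; ring

lemma gl_simple (c P : ℝ[X]) (N : ℝ) (hN : N ≠ 0) (hc : c = (X^2-1) * derivative P)
    (h : derivative c = C N * P) (hc0 : c ≠ 0) (hP : P ≠ 0) : c.roots.Nodup := by
  rw [Multiset.nodup_iff_count_le_one]
  intro a
  rw [count_roots]
  by_contra hlt
  push Not at hlt
  obtain ⟨r1, r2⟩ := (one_lt_rootMultiplicity_iff_isRoot hc0).1 hlt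
  have r3 : P.IsRoot a := by
    rw [h] at r2; simpa [hN] using r2
  have m1 := derivative_rootMultiplicity_of_root r1
  have m2 := derivative_rootMultiplicity_of_root r3
  have m3 : rootMultiplicity a c = rootMultiplicity a (X^2-1 : ℝ[X]) + rootMultiplicity a (derivative P) := by
    rw [hc] at hc0 ⊢
    exact rootMultiplicity_mul hc0
  have m4 : rootMultiplicity a (derivative c) = rootMultiplicity a P := by
    rw [h, rootMultiplicity_mul (mul_ne_zero (by simpa using hN) hP), rootMultiplicity_C, zero_add]
  have m5 : 0 < rootMultiplicity a P := (rootMultiplicity_pos hP).2 r3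
  have hq : (X^2-1 : ℝ[X]) ≠ 0 := by
    intro h0; rw [h0] at hc; simp at hc; exact hc0 hc
  have m6 : rootMultiplicity a (X^2-1 : ℝ[X]) ≤ 1 := by
    by_contra hh
    push Not at hh
    obtain ⟨s1, s2⟩ := (one_lt_rootMultiplicity_iff_isRoot hq).1 hh
    simp [map_ofNat] at s1 s2
    rw [s2] at s1; norm_num at s1
  omega

lemma gl_dvd (c f : ℝ[X]) (hc0 : c ≠ 0) (hn : c.roots.Nodup) (hs : c.roots.card = c.natDegree)
    (hf : ∀ x, c.eval x = 0 → f.eval x = 0) : c ∣ f := by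
  by_cases hf0 : f = 0
  · simp [hf0]
  have hle : c.roots ≤ f.roots := by
    rw [Multiset.le_iff_subset hn]
    intro x hx
    rw [mem_roots hc0] at hx
    rw [mem_roots hf0]
    exact hf x hx
  rw [← C_leadingCoeff_mul_prod_multiset_X_sub_C hs]
  have hu : IsUnit (C c.leadingCoeff) := isUnit_C.2 (by simpa using hc0)
  rw [hu.mul_left_dvd]
  exact (Multiset.prod_dvd_prod_of_le (Multiset.map_le_map hle)).trans (prod_multiset_X_sub_C_dvd f)

theorem gauss_lobatto_interp_error (p : ℕ) (hp : 2 ≤ p)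
    (u v : Polynomial ℝ) (hu : u.natDegree ≤ p) (hv : v.natDegree ≤ p - 1)
    (hinterp : ∀ x : ℝ, (lobattoChi p).eval x = 0 → v.eval x = u.eval x) :
    ∫ x in (-1 : ℝ)..1, (u.eval x - v.eval x) ^ 2 ≤
      (2 / (4 * (p : ℝ) ^ 2 - 4 * p - 3)) *
        ∫ x in (-1 : ℝ)..1, (Polynomial.derivative u).eval x ^ 2 := by
  obtain ⟨m, rfl⟩ : ∃ m, p = m + 2 := ⟨p - 2, by omega⟩
  have e1 : m + 2 - 1 = m + 1 := rfl
  rw [e1] at hv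
  set g : ℝ[X] := derivative^[m+1] ((X^2-1 : ℝ[X])^(m+1)) with hg
  set a : ℝ := 1 / (2 ^ (m+1) * ((m+1).factorial : ℝ)) with ha
  have ha0 : a ≠ 0 := by rw [ha]; positivity
  have hP : legendre (m+1) = C a * g := rfl
  set N : ℝ := ((m:ℝ)+1)*(m+2) with hN
  have hN0 : N ≠ 0 := by rw [hN]; positivity
  have hgd : g.natDegree = m + 1 := by rw [hg, gl_deg, gl_wdeg]; omega
  have hg0 : g ≠ 0 := by intro h; rw [h] at hgd; simp at hgd
  have hg'0 : derivative g ≠ 0 := derivative_ne_zero.2 (by omega)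
  set P := C a * g with hPdef
  have hP0 : P ≠ 0 := mul_ne_zero (by simpa using ha0) hg0
  set c := (X^2-1) * derivative P with hc
  have hchi : lobattoChi (m+2) = c := by
    rw [lobattoChi, e1, hP, hc, mul_comm]
  have hP' : derivative P = C a * derivative g := by rw [hPdef, derivative_C_mul]
  have hc' : derivative c = C N * P := by
    have := gl_ode0 m
    rw [← hg, ← hN] at this
    rw [hc, hP', show (X^2-1) * (C a * derivative g) = C a * ((X^2-1) * derivative g) by ring, derivative_C_mul, this, hPdef]
    ring
  have hcr : c = C a * ((X^2-1) * derivative g) := by rw [hc, hP']; ring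
  have hq0 : (X^2-1 : ℝ[X]) ≠ 0 := by
    intro h; have := gl_wdeg 1; rw [h] at this; simp at this
  have hqg : (X^2-1) * derivative g ≠ 0 := mul_ne_zero hq0 hg'0
  have hc0 : c ≠ 0 := by rw [hcr]; exact mul_ne_zero (by simpa using ha0) hqg
  have hcdeg : c.natDegree = m + 2 := by
    rw [hcr, natDegree_C_mul ha0, natDegree_mul hq0 hg'0, natDegree_derivative, hgd]
    have := gl_wdeg 1
    rw [pow_one] at this
    omega
  have hcroots : c.roots.card = c.natDegree := by
    apply le_antisymm (card_roots' c)
    rw [hcdeg, hcr, roots_C_mul _ ha0, roots_mul hqg, Multiset.card_add]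
    have h1 := gl_wroots 1
    rw [pow_one] at h1
    have h2 := gl_roots ((X^2-1 : ℝ[X])^(m+1)) (m+2)
    rw [gl_wroots, Function.iterate_succ_apply', ← hg] at h2
    omega
  have hnd := gl_simple c P N hN0 hc hc' hc0 hP0
  obtain ⟨r, hr⟩ := gl_dvd c (u - v) hc0 hnd hcroots (by
    intro x hx
    rw [eval_sub, hinterp x (by rw [hchi]; exact hx), sub_self])
  obtain ⟨t, ht⟩ : ∃ t : ℝ, u - v = C t * c := by
    by_cases hr0 : r = 0
    · exact ⟨0, by simp [hr, hr0]⟩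
    have h1 : (u - v).natDegree ≤ m + 2 := (natDegree_sub_le _ _).trans (max_le hu (by omega))
    rw [hr, natDegree_mul hc0 hr0, hcdeg] at h1
    refine ⟨r.coeff 0, ?_⟩
    rw [hr, eq_C_of_natDegree_eq_zero (show r.natDegree = 0 by omega)]
    simp [mul_comm]
  have hu' : derivative u = derivative v + C t * derivative c := by
    have : u = v + C t * c := by rw [← ht]; ring
    rw [this, derivative_add, derivative_C_mul]
  have horth : ∫ x in (-1:ℝ)..1, (derivative v * g).eval x = 0 := by
    apply gl_orth_s7 (m+1) (m+1) le_rfl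
    rw [← Function.iterate_succ_apply]
    exact iterate_derivative_eq_zero (by omega)
  have hnorm := gl_norm_s7 c P N hc hc'
  set A := ∫ x in (-1:ℝ)..1, (c*c).eval x with hA
  set B := ∫ x in (-1:ℝ)..1, (derivative c * derivative c).eval x with hB
  have hL : ∫ x in (-1 : ℝ)..1, (u.eval x - v.eval x) ^ 2 = t^2 * A := by
    rw [hA, ← intervalIntegral.integral_const_mul]
    congr 1; ext x
    rw [← eval_sub, ht]; simp; ring
  have hR : ∫ x in (-1 : ℝ)..1, (derivative u).eval x ^ 2 =
      (∫ x in (-1 : ℝ)..1, (derivative v).eval x ^ 2) + t^2 * B := by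
    have e : ∀ x : ℝ, (derivative u).eval x ^ 2 = (derivative v).eval x ^ 2 +
        ((2 * t * N * a) * (derivative v * g).eval x + t^2 * (derivative c * derivative c).eval x) := by
      intro x
      have : (derivative c).eval x = N * a * g.eval x := by rw [hc', hPdef]; simp; ring
      rw [hu']
      simp only [eval_add, eval_mul, eval_C, this]
      ring
    simp only [e]
    have i1 : ∀ (s : ℝ) (f : ℝ[X]), IntervalIntegrable (fun x => s * f.eval x) volume (-1) 1 :=
      fun s f => (f.continuous.const_mul s).intervalIntegrable _ _
    have i2 : IntervalIntegrable (fun x => (derivative v).eval x ^ 2) volume (-1) 1 :=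
      ((derivative v).continuous.pow 2).intervalIntegrable _ _
    rw [intervalIntegral.integral_add i2
      ((i1 _ _).add (i1 _ _)), intervalIntegral.integral_add (i1 _ _) (i1 _ _),
      intervalIntegral.integral_const_mul, intervalIntegral.integral_const_mul, horth]
    ring
  have hV : 0 ≤ ∫ x in (-1 : ℝ)..1, (derivative v).eval x ^ 2 :=
    intervalIntegral.integral_nonneg (by norm_num) (fun x _ => sq_nonneg _)
  have hden : (4 * ((m+2 : ℕ) : ℝ) ^ 2 - 4 * ((m+2 : ℕ) : ℝ) - 3) = 4 * N - 3 := by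
    rw [hN]; push_cast; ring
  have hpos : 0 < 4 * N - 3 := by
    have : (0:ℝ) ≤ m := Nat.cast_nonneg m
    rw [hN]; nlinarith
  rw [hL, hR, hden, div_mul_eq_mul_div, le_div_iff₀ hpos]
  nlinarith
end

section
/- Let p ≥ 2 be an integer, let χ_p(x) = P_{p-1}'(x)(x² − 1), and set γ_p = √(2/(2p−3)) / √(2/(2p+1) + 2/(2p−3)). Then for every real polynomial u of degree at most p−1, |∫_{−1}^{1} u(x) χ_p(x) dx| ≤ γ_p · (∫_{−1}^{1} u(x)² dx)^{1/2} · (∫_{−1}^{1} χ_p(x)² dx)^{1/2}. -/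
open Polynomial

namespace LobattoAux

/-- antiderivative-type polynomial D^k (X^2-1)^n -/
noncomputable def DW (k n : ℕ) : Polynomial ℝ :=
  (⇑(Polynomial.derivative (R := ℝ)))^[k] ((Polynomial.X ^ 2 - 1) ^ n)

noncomputable def cc (n : ℕ) : ℝ := 1 / (2 ^ n * (n.factorial : ℝ))

lemma cc_succ (n : ℕ) : cc (n+1) * (2 * (n+1)) = cc n := by
  unfold cc
  have : (n.factorial : ℝ) ≠ 0 := by positivity
  have h2 : (n:ℝ) + 1 ≠ 0 := by positivity
  rw [Nat.factorial_succ]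
  push_cast
  field_simp
  ring

lemma legendre_eq (n : ℕ) : legendre n = C (cc n) * DW n n := rfl

lemma DW_succ (k n : ℕ) : DW (k+1) n = derivative (DW k n) := by
  unfold DW; rw [Function.iterate_succ_apply']

lemma der_W (n : ℕ) : derivative ((X ^ 2 - 1 : ℝ[X]) ^ (n+1)) =
    C (2 * ((n:ℝ)+1)) * (X * (X^2-1)^n) := by
  simp only [derivative_pow, derivative_sub, derivative_X, derivative_one, map_mul, map_add, map_natCast, map_one, map_ofNat]
  simp
  ring

lemma DW_succ' (k n : ℕ) : DW (k+1) (n+1) = C (2 * ((n:ℝ)+1)) *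
    (⇑(Polynomial.derivative (R := ℝ)))^[k] (X * (X^2-1)^n) := by
  unfold DW
  rw [Function.iterate_succ_apply, der_W, iterate_derivative_C_mul]

lemma iter_X_mul (k : ℕ) (f : ℝ[X]) : (⇑(Polynomial.derivative (R := ℝ)))^[k+1] (X * f) =
    X * (⇑(Polynomial.derivative (R := ℝ)))^[k+1] f + C ((k:ℝ)+1) * (⇑(Polynomial.derivative (R := ℝ)))^[k] f := by
  induction k with
  | zero => simp; ring
  | succ k ih =>
    rw [Function.iterate_succ_apply', ih]
    simp only [derivative_add, derivative_mul, derivative_C, derivative_X, ← Function.iterate_succ_apply' (f := ⇑(Polynomial.derivative (R := ℝ)))]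
    push_cast
    simp only [map_add, map_one]
    ring

lemma iter_X2 (k : ℕ) (f : ℝ[X]) : (⇑(Polynomial.derivative (R := ℝ)))^[k+2] ((X^2-1) * f) =
    (X^2-1) * (⇑(Polynomial.derivative (R := ℝ)))^[k+2] f
    + C (2*((k:ℝ)+2)) * X * (⇑(Polynomial.derivative (R := ℝ)))^[k+1] f
    + C (((k:ℝ)+2)*((k:ℝ)+1)) * (⇑(Polynomial.derivative (R := ℝ)))^[k] f := by
  have : (X^2-1) * f = X * (X * f) - f := by ring
  rw [this, iterate_derivative_sub, iter_X_mul, iter_X_mul, iter_X_mul]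
  push_cast
  simp only [map_add, map_one, map_mul, map_ofNat]
  ring

lemma rec1 (m : ℕ) : DW (m+2) (m+2) = C (2 * ((m:ℝ)+2)) *
    (X * DW (m+1) (m+1) + C ((m:ℝ)+1) * DW m (m+1)) := by
  rw [DW_succ', iter_X_mul]
  unfold DW
  push_cast
  ring_nf

lemma rec2 (m : ℕ) : DW (m+2) (m+2) = C (2 * ((m:ℝ)+2)) *
    (C (2*(m:ℝ)+3) * DW m (m+1) + C (2*((m:ℝ)+1)) * DW m m) := by
  unfold DW
  rw [Function.iterate_succ_apply, der_W, iterate_derivative_C_mul, Function.iterate_succ_apply,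
    derivative_mul, der_W, derivative_X]
  have : (1 * (X ^ 2 - 1) ^ (m + 1) + X * (C (2 * ((m:ℝ) + 1)) * (X * (X ^ 2 - 1) ^ m)) : ℝ[X])
    = C (2*(m:ℝ)+3) * (X ^ 2 - 1) ^ (m + 1) + C (2*((m:ℝ)+1)) * (X ^ 2 - 1) ^ m := by
    simp only [map_add, map_one, map_mul, map_ofNat]
    ring
  rw [this, iterate_map_add (derivative (R := ℝ)), iterate_derivative_C_mul, iterate_derivative_C_mul]
  push_cast
  ring_nf

lemma ode (m : ℕ) : (X^2-1) * DW (m+2) (m+1) = C (((m:ℝ)+1)*((m:ℝ)+2)) * DW m (m+1) := by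
  have h : (X^2-1) * derivative ((X ^ 2 - 1 : ℝ[X]) ^ (m+1)) =
    C (2 * ((m:ℝ)+1)) * (X * (X^2-1)^(m+1)) := by rw [der_W]; ring
  rcases m with _ | m
  · unfold DW
    simp [show (C (2:ℝ) : ℝ[X]) = 2 from rfl]
    ring
  · have h2 := congrArg (⇑(Polynomial.derivative (R := ℝ)))^[m+2] h
    rw [iter_X2, iterate_derivative_C_mul, iter_X_mul] at h2
    simp only [← Function.iterate_succ_apply] at h2
    unfold DW
    push_cast at *
    simp only [map_add, map_one, map_mul, map_ofNat, map_natCast] at *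
    linear_combination h2

lemma chi_eq (m : ℕ) : lobattoChi (m+2) = C (((m:ℝ)+1)*((m:ℝ)+2)/(2*m+3)) * (legendre (m+2) - legendre m) := by
  unfold lobattoChi
  rw [show m + 2 - 1 = m + 1 from rfl, legendre_eq, legendre_eq, legendre_eq, derivative_C_mul, ← DW_succ, mul_assoc,
    mul_comm _ (X^2-1 : ℝ[X]), ode, rec2, ← cc_succ m, ← cc_succ (m+1)]
  have h : (2*(m:ℝ)+3) ≠ 0 := by positivity
  have e : C (((m:ℝ)+1)*((m:ℝ)+2)/(2*m+3)) * C (2*(m:ℝ)+3) = C (((m:ℝ)+1)*((m:ℝ)+2)) := by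
    rw [← C_mul, div_mul_cancel₀ _ h]
  rw [← e]
  push_cast
  simp only [map_add, map_one, map_mul, map_ofNat, map_natCast]
  ring

lemma eval_sq (n : ℕ) (x : ℝ) (hx : x^2 = 1) : (legendre n).eval x ^ 2 = 1 := by
  induction n with
  | zero => simp [legendre]
  | succ n ih =>
    rcases n with _ | m
    · simp [legendre, mul_pow, hx]; norm_num
    · have h0 : (DW m (m+1)).eval x = 0 := by
        have := congrArg (Polynomial.eval x) (ode m)
        simp only [eval_mul, eval_sub, eval_pow, eval_X, eval_one, hx, eval_C, sub_self, zero_mul] at this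
        have h : ((m:ℝ)+1)*((m:ℝ)+2) ≠ 0 := by positivity
        simpa [h] using this.symm
      have : (legendre (m+2)).eval x = x * (legendre (m+1)).eval x := by
        rw [legendre_eq, legendre_eq, rec1, ← cc_succ (m+1)]
        simp only [eval_mul, eval_add, eval_C, h0, eval_X]
        push_cast
        ring
      rw [this, mul_pow, ih, hx, one_mul]

lemma DW_eval (k n : ℕ) (h : k < n) (x : ℝ) (hx : x^2 = 1) : (DW k n).eval x = 0 := by
  have h1 := Polynomial.pow_sub_dvd_iterate_derivative_pow (X^2-1 : ℝ[X]) n k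
  have h2 : (X^2-1 : ℝ[X]) ∣ DW k n := (dvd_pow_self _ (by omega)).trans h1
  obtain ⟨q, hq⟩ := h2
  rw [hq]; simp [hx]

lemma ibp (f g : ℝ[X]) : ∫ x in (-1:ℝ)..1, f.eval x * (derivative g).eval x =
    f.eval 1 * g.eval 1 - f.eval (-1) * g.eval (-1) - ∫ x in (-1:ℝ)..1, (derivative f).eval x * g.eval x :=
  intervalIntegral.integral_mul_deriv_eq_deriv_mul (fun x _ => f.hasDerivAt x) (fun x _ => g.hasDerivAt x)
    ((derivative f).continuous.intervalIntegrable _ _) ((derivative g).continuous.intervalIntegrable _ _)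

lemma orth_aux (n j : ℕ) (hj : j ≤ n) (u : ℝ[X]) (hu : u.natDegree < j) :
    ∫ x in (-1:ℝ)..1, u.eval x * (DW j n).eval x = 0 := by
  induction j generalizing u with
  | zero => omega
  | succ j ih =>
    rw [DW_succ, ibp, DW_eval j n (by omega) _ (by norm_num), DW_eval j n (by omega) _ (by norm_num)]
    by_cases h : u.natDegree = 0
    · have : derivative u = 0 := derivative_of_natDegree_zero h
      simp [this]
    · rw [ih (by omega) _ (by have := natDegree_derivative_lt h; omega)]
      simp

lemma orth (n : ℕ) (u : ℝ[X]) (hu : u.natDegree < n) :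
    ∫ x in (-1:ℝ)..1, u.eval x * (legendre n).eval x = 0 := by
  have := orth_aux n n le_rfl u hu
  simp only [legendre_eq, eval_mul, eval_C, mul_left_comm _ (cc n)]
  rw [intervalIntegral.integral_const_mul, this, mul_zero]

lemma natDegree_leg (n : ℕ) : (legendre n).natDegree ≤ n := by
  rw [legendre_eq]
  refine (natDegree_C_mul_le _ _).trans ?_
  refine (natDegree_iterate_derivative _ _).trans ?_
  have h1 : (X^2-1 : ℝ[X]).natDegree ≤ 2 := by compute_degree
  have h2 : ((X^2-1 : ℝ[X])^n).natDegree ≤ n * 2 := natDegree_pow_le_of_le n h1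
  omega

lemma norm_leg (n : ℕ) : ∫ x in (-1:ℝ)..1, (legendre n).eval x * (legendre n).eval x = 2 / (2*n+1) := by
  set P := legendre n with hP
  have cont : ∀ f : ℝ[X], IntervalIntegrable (fun x => f.eval x) MeasureTheory.volume (-1:ℝ) 1 :=
    fun f => f.continuous.intervalIntegrable _ _
  have h1 := ibp (X * P) P
  have e1 : ∫ x in (-1:ℝ)..1, (X * derivative P - C (n:ℝ) * P).eval x * P.eval x = 0 := by
    rcases n with _ | n
    · have : derivative P = 0 := derivative_of_natDegree_zero (by exact Nat.le_zero.1 (natDegree_leg 0))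
      simp [this]
    · apply orth
      rw [Nat.lt_succ_iff, natDegree_le_iff_coeff_eq_zero]
      intro N hN
      obtain ⟨N, rfl⟩ : ∃ k, N = k + 1 := ⟨N - 1, by omega⟩
      rw [coeff_sub, coeff_X_mul, coeff_derivative, coeff_C_mul]
      rcases Nat.lt_or_ge n N with h | h
      · rw [coeff_eq_zero_of_natDegree_lt (p := P) (lt_of_le_of_lt (natDegree_leg (n+1)) (by omega))]; simp
      · have : N = n := by omega
        subst this; push_cast; ring
  have e2 : ∫ x in (-1:ℝ)..1, (X * P).eval x * (derivative P).eval x = n * ∫ x in (-1:ℝ)..1, P.eval x * P.eval x := by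
    rw [← intervalIntegral.integral_const_mul, ← sub_eq_zero, ← intervalIntegral.integral_sub, ← e1]
    · congr 1; ext x; simp; ring
    · have hh := cont (X * P * derivative P); simp only [eval_mul, eval_pow, eval_add, eval_C, eval_X] at hh ⊢; exact hh
    · have hh := cont (C (n:ℝ) * (P * P)); simp only [eval_mul, eval_pow, eval_add, eval_C, eval_X] at hh ⊢; exact hh
  have e3 : ∫ x in (-1:ℝ)..1, (derivative (X * P)).eval x * P.eval x =
     (∫ x in (-1:ℝ)..1, P.eval x * P.eval x) + ∫ x in (-1:ℝ)..1, (X * P).eval x * (derivative P).eval x := by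
    rw [← intervalIntegral.integral_add]
    · congr 1; ext x; simp; ring
    · have hh := cont (P * P); simp only [eval_mul, eval_pow, eval_add, eval_C, eval_X] at hh ⊢; exact hh
    · have hh := cont (X * P * derivative P); simp only [eval_mul, eval_pow, eval_add, eval_C, eval_X] at hh ⊢; exact hh
  have v1 := eval_sq n 1 (by norm_num)
  have v2 := eval_sq n (-1) (by norm_num)
  rw [e3, e2] at h1
  simp only [eval_mul, eval_X] at h1
  rw [eq_div_iff (by positivity)]
  rw [← hP] at v1 v2
  linear_combination h1 + v1 + v2

lemma cs (f g : ℝ[X]) : |∫ x in (-1:ℝ)..1, f.eval x * g.eval x| ≤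
    Real.sqrt (∫ x in (-1:ℝ)..1, f.eval x ^ 2) * Real.sqrt (∫ x in (-1:ℝ)..1, g.eval x ^ 2) := by
  have cont : ∀ f : ℝ[X], IntervalIntegrable (fun x => f.eval x) MeasureTheory.volume (-1:ℝ) 1 :=
    fun f => f.continuous.intervalIntegrable _ _
  have hf : 0 ≤ ∫ x in (-1:ℝ)..1, f.eval x ^ 2 :=
    intervalIntegral.integral_nonneg (by norm_num) fun x _ => sq_nonneg _
  rw [← Real.sqrt_mul hf]
  apply Real.abs_le_sqrt
  have key : ∀ t : ℝ, 0 ≤ (∫ x in (-1:ℝ)..1, f.eval x ^ 2) * (t * t) + (2 * ∫ x in (-1:ℝ)..1, f.eval x * g.eval x) * t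
      + ∫ x in (-1:ℝ)..1, g.eval x ^ 2 := by
    intro t
    have h : 0 ≤ ∫ x in (-1:ℝ)..1, (t * f.eval x + g.eval x) ^ 2 :=
      intervalIntegral.integral_nonneg (by norm_num) fun x _ => sq_nonneg _
    have e : ∫ x in (-1:ℝ)..1, (t * f.eval x + g.eval x) ^ 2 =
       (∫ x in (-1:ℝ)..1, (t*t) * f.eval x ^ 2) + (∫ x in (-1:ℝ)..1, (2*t) * (f.eval x * g.eval x)) + ∫ x in (-1:ℝ)..1, g.eval x ^ 2 := by
      rw [← intervalIntegral.integral_add, ← intervalIntegral.integral_add]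
      · congr 1; ext x; ring
      · have hh := cont (C (t*t) * f^2 + C (2*t) * (f*g)); simp only [eval_mul, eval_pow, eval_add, eval_C, eval_X] at hh ⊢; exact hh
      · have hh := cont (g^2); simp only [eval_mul, eval_pow, eval_add, eval_C, eval_X] at hh ⊢; exact hh
      · have hh := cont (C (t*t) * f^2); simp only [eval_mul, eval_pow, eval_add, eval_C, eval_X] at hh ⊢; exact hh
      · have hh := cont (C (2*t) * (f*g)); simp only [eval_mul, eval_pow, eval_add, eval_C, eval_X] at hh ⊢; exact hh
    rw [e, intervalIntegral.integral_const_mul, intervalIntegral.integral_const_mul] at h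
    linarith
  have := discrim_le_zero key
  unfold discrim at this
  linarith

end LobattoAux

/-- Improved Cauchy–Schwarz inequality for `χ_p`: with
`γ_p = √(2/(2p−3)) / √(2/(2p+1) + 2/(2p−3))`, every polynomial `u` of degree at most
`p − 1` satisfies `|∫_{−1}^{1} u χ_p| ≤ γ_p ‖u‖_{L²} ‖χ_p‖_{L²}`. -/
theorem inner_lobattoChi_improved_cauchy_schwarz (p : ℕ) (hp : 2 ≤ p)
    (u : Polynomial ℝ) (hu : u.natDegree ≤ p - 1) :
    |∫ x in (-1 : ℝ)..1, u.eval x * (lobattoChi p).eval x| ≤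
      (Real.sqrt (2 / (2 * (p : ℝ) - 3)) /
          Real.sqrt (2 / (2 * (p : ℝ) + 1) + 2 / (2 * (p : ℝ) - 3))) *
        Real.sqrt (∫ x in (-1 : ℝ)..1, u.eval x ^ 2) *
        Real.sqrt (∫ x in (-1 : ℝ)..1, (lobattoChi p).eval x ^ 2) := by
  obtain ⟨m, rfl⟩ : ∃ m, p = m + 2 := ⟨p - 2, by omega⟩
  have cont : ∀ f : ℝ[X], IntervalIntegrable (fun x => f.eval x) MeasureTheory.volume (-1:ℝ) 1 :=
    fun f => f.continuous.intervalIntegrable _ _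
  set c : ℝ := ((m:ℝ)+1)*((m:ℝ)+2)/(2*m+3) with hc
  have hc0 : 0 ≤ c := by positivity
  have n1 := LobattoAux.norm_leg (m+2)
  have n2 := LobattoAux.norm_leg m
  have o1 := LobattoAux.orth (m+2) u (by omega)
  have o2 := LobattoAux.orth (m+2) (legendre m) (by have := LobattoAux.natDegree_leg m; omega)
  have i1 : ∫ x in (-1 : ℝ)..1, u.eval x * (lobattoChi (m+2)).eval x
      = - (c * ∫ x in (-1 : ℝ)..1, u.eval x * (legendre m).eval x) := by
    have : ∫ x in (-1 : ℝ)..1, u.eval x * (lobattoChi (m+2)).eval x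
      = c * ((∫ x in (-1 : ℝ)..1, u.eval x * (legendre (m+2)).eval x) - ∫ x in (-1 : ℝ)..1, u.eval x * (legendre m).eval x) := by
      rw [← intervalIntegral.integral_sub, ← intervalIntegral.integral_const_mul]
      · congr 1; ext x; rw [LobattoAux.chi_eq]; simp only [eval_mul, eval_C, eval_sub]; ring
      · have hh := cont (u * legendre (m+2)); simp only [eval_mul, eval_pow, eval_add, eval_C, eval_X] at hh ⊢; exact hh
      · have hh := cont (u * legendre m); simp only [eval_mul, eval_pow, eval_add, eval_C, eval_X] at hh ⊢; exact hh
    rw [this, o1]; ring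
  have i2 : ∫ x in (-1 : ℝ)..1, (lobattoChi (m+2)).eval x ^ 2
      = c^2 * (2 / (2 * ((m+2:ℕ) : ℝ) + 1) + 2 / (2 * ((m+2:ℕ) : ℝ) - 3)) := by
    have : ∫ x in (-1 : ℝ)..1, (lobattoChi (m+2)).eval x ^ 2
      = c^2 * ((∫ x in (-1 : ℝ)..1, (legendre (m+2)).eval x * (legendre (m+2)).eval x)
        + (∫ x in (-1 : ℝ)..1, (legendre m).eval x * (legendre m).eval x)
        - 2 * ∫ x in (-1 : ℝ)..1, (legendre m).eval x * (legendre (m+2)).eval x) := by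
      rw [← intervalIntegral.integral_const_mul 2, ← intervalIntegral.integral_add, ← intervalIntegral.integral_sub, ← intervalIntegral.integral_const_mul]
      · congr 1; ext x; rw [LobattoAux.chi_eq]; simp only [eval_mul, eval_C, eval_sub]; ring
      · have hh := cont (legendre (m+2) * legendre (m+2) + legendre m * legendre m); simp only [eval_mul, eval_pow, eval_add, eval_C, eval_X] at hh ⊢; exact hh
      · have hh := cont (C 2 * (legendre m * legendre (m+2))); simp only [eval_mul, eval_pow, eval_add, eval_C, eval_X] at hh ⊢; exact hh
      · have hh := cont (legendre (m+2) * legendre (m+2)); simp only [eval_mul, eval_pow, eval_add, eval_C, eval_X] at hh ⊢; exact hh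
      · have hh := cont (legendre m * legendre m); simp only [eval_mul, eval_pow, eval_add, eval_C, eval_X] at hh ⊢; exact hh
    rw [this, o2, n1, n2]
    push_cast
    ring_nf
  have h3 : (2 * ((m+2:ℕ) : ℝ) - 3) = 2 * m + 1 := by push_cast; ring
  have n3 : ∫ x in (-1 : ℝ)..1, (legendre m).eval x ^ 2 = 2 / (2 * ((m+2:ℕ) : ℝ) - 3) := by
    rw [h3, ← n2]; simp only [sq]
  have hpos : 0 < 2 / (2 * ((m+2:ℕ) : ℝ) + 1) + 2 / (2 * ((m+2:ℕ) : ℝ) - 3) := by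
    rw [h3]; positivity
  have k := LobattoAux.cs u (legendre m)
  rw [n3] at k
  rw [i1, i2, abs_neg, abs_mul, abs_of_nonneg hc0, Real.sqrt_mul (sq_nonneg c), Real.sqrt_sq hc0]
  have hs := (Real.sqrt_pos.2 hpos).ne'
  refine (mul_le_mul_of_nonneg_left k hc0).trans (le_of_eq ?_)
  generalize Real.sqrt (2 / (2 * ((m+2:ℕ) : ℝ) + 1) + 2 / (2 * ((m+2:ℕ) : ℝ) - 3)) = b at *
  field_simp
end

section
/- Let V be a real vector space and a : V × V → ℝ a symmetric positive semidefinite bilinear form. Let v_1, …, v_K ∈ V and let N ∈ ℕ be such that for each index i, the number of indices j ∈ {1, …, K} with a(v_i, v_j) ≠ 0 is at most N. Then a(Σ_{i=1}^{K} v_i, Σ_{i=1}^{K} v_i) ≤ N Σ_{i=1}^{K} a(v_i, v_i). -/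
/-- Finite-overlap estimate for a symmetric positive semidefinite bilinear form:
if each `v i` "interacts" (via `a`) with at most `N` of the vectors `v j`, then
`a(Σ v_i, Σ v_i) ≤ N Σ a(v_i, v_i)`. -/
theorem finite_overlap_bound {V : Type*} [AddCommGroup V] [Module ℝ V]
    (a : V →ₗ[ℝ] V →ₗ[ℝ] ℝ)
    (hsymm : ∀ u v : V, a u v = a v u)
    (hpsd : ∀ v : V, 0 ≤ a v v)
    (K : ℕ) (v : Fin K → V) (N : ℕ)
    (hN : ∀ i : Fin K, {j : Fin K | a (v i) (v j) ≠ 0}.ncard ≤ N) :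
    a (∑ i, v i) (∑ i, v i) ≤ N * ∑ i, a (v i) (v i) := by
  classical
  set c : Fin K → Fin K → ℝ := fun i j => if a (v i) (v j) ≠ 0 then 1 else 0 with hc
  have h1 : ∀ i j, a (v i) (v j) ≤ c i j * a (v i) (v i) / 2 + c j i * a (v j) (v j) / 2 := by
    intro i j
    have hs := hsymm (v j) (v i)
    by_cases h : a (v i) (v j) = 0
    · simp [hc, hs, h]
    · have h2 := hpsd (v i - v j)
      simp only [map_sub, LinearMap.sub_apply] at h2
      simp only [hc, hs, h, ne_eq, not_false_eq_true, if_true]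
      linarith
  have h2 : ∀ i, ∑ j, c i j * a (v i) (v i) ≤ N * a (v i) (v i) := by
    intro i
    rw [← Finset.sum_mul]
    refine mul_le_mul_of_nonneg_right ?_ (hpsd _)
    have h3 := hN i
    rw [Set.ncard_eq_toFinset_card'] at h3
    simp only [hc, Finset.sum_boole]
    have h4 : (Finset.univ.filter fun j => a (v i) (v j) ≠ 0).card ≤ N := by
      refine le_trans (le_of_eq ?_) h3
      congr 1
      ext j
      simp
    exact_mod_cast h4
  have h5 : ∑ i, ∑ j, c j i * a (v j) (v j) / 2 = ∑ i, ∑ j, c i j * a (v i) (v i) / 2 :=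
    Finset.sum_comm
  calc a (∑ i, v i) (∑ i, v i) = ∑ i, ∑ j, a (v i) (v j) := by
        simp only [map_sum, LinearMap.sum_apply]
        exact Finset.sum_comm
    _ ≤ ∑ i, ∑ j, (c i j * a (v i) (v i) / 2 + c j i * a (v j) (v j) / 2) :=
        Finset.sum_le_sum fun i _ => Finset.sum_le_sum fun j _ => h1 i j
    _ = ∑ i, ∑ j, c i j * a (v i) (v i) := by
        simp only [Finset.sum_add_distrib]
        rw [h5]
        simp only [← Finset.sum_add_distrib, add_halves]
    _ ≤ ∑ i, N * a (v i) (v i) := Finset.sum_le_sum fun i _ => h2 i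
    _ = N * ∑ i, a (v i) (v i) := by rw [Finset.mul_sum]
end

section
/- Let V and Ṽ be finite-dimensional real inner product spaces, let A : V → V and Ã : Ṽ → Ṽ be self-adjoint positive-definite linear operators, let R : Ṽ → V be linear, and let c_R, c_S > 0 be constants. Assume: (i) ⟨A(Rṽ), Rṽ⟩ ≤ c_R ⟨Ãṽ, ṽ⟩ for all ṽ ∈ Ṽ; (ii) for every v ∈ V there exists ṽ ∈ Ṽ with Rṽ = v and ⟨Ãṽ, ṽ⟩ ≤ c_S ⟨Av, v⟩. Then the operator B = R ∘ Ã⁻¹ ∘ R*, where R* is the adjoint of R, satisfies c_S⁻¹ ⟨A⁻¹v, v⟩ ≤ ⟨Bv, v⟩ ≤ c_R ⟨A⁻¹v, v⟩ for all v ∈ V. -/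
open RealInnerProductSpace

/-- Nepomnyaschikh's fictitious space lemma: if `A` and `Ã` are self-adjoint
positive-definite operators on finite-dimensional real inner product spaces `V`
and `W`, `R : W → V` is linear with `⟨A(Rw), Rw⟩ ≤ c_R ⟨Ãw, w⟩` for all `w`, and
every `v ∈ V` admits `w` with `Rw = v` and `⟨Ãw, w⟩ ≤ c_S ⟨Av, v⟩`, then the
preconditioner `B = R ∘ Ã⁻¹ ∘ R*` satisfies
`c_S⁻¹ ⟨A⁻¹v, v⟩ ≤ ⟨Bv, v⟩ ≤ c_R ⟨A⁻¹v, v⟩` for all `v`. -/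
theorem fictitious_space_lemma
    {V W : Type*}
    [NormedAddCommGroup V] [InnerProductSpace ℝ V] [FiniteDimensional ℝ V]
    [NormedAddCommGroup W] [InnerProductSpace ℝ W] [FiniteDimensional ℝ W]
    (A : V →ₗ[ℝ] V) (At : W →ₗ[ℝ] W) (R : W →ₗ[ℝ] V)
    (cR cS : ℝ) (hcR : 0 < cR) (hcS : 0 < cS)
    (hA_sa : ∀ u v : V, ⟪A u, v⟫ = ⟪u, A v⟫)
    (hA_pd : ∀ v : V, v ≠ 0 → 0 < ⟪A v, v⟫)
    (hAt_sa : ∀ u w : W, ⟪At u, w⟫ = ⟪u, At w⟫)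
    (hAt_pd : ∀ w : W, w ≠ 0 → 0 < ⟪At w, w⟫)
    (hR : ∀ w : W, ⟪A (R w), R w⟫ ≤ cR * ⟪At w, w⟫)
    (hS : ∀ v : V, ∃ w : W, R w = v ∧ ⟪At w, w⟫ ≤ cS * ⟪A v, v⟫)
    (Ainv : V →ₗ[ℝ] V) (hAinv₁ : A ∘ₗ Ainv = LinearMap.id) (hAinv₂ : Ainv ∘ₗ A = LinearMap.id)
    (Atinv : W →ₗ[ℝ] W) (hAtinv₁ : At ∘ₗ Atinv = LinearMap.id)
    (hAtinv₂ : Atinv ∘ₗ At = LinearMap.id) :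
    ∀ v : V,
      cS⁻¹ * ⟪Ainv v, v⟫ ≤ ⟪(R ∘ₗ Atinv ∘ₗ LinearMap.adjoint R) v, v⟫ ∧
      ⟪(R ∘ₗ Atinv ∘ₗ LinearMap.adjoint R) v, v⟫ ≤ cR * ⟪Ainv v, v⟫ := by
  intro v
  have hAnn : ∀ y : V, 0 ≤ ⟪A y, y⟫ := fun y => by
    by_cases h : y = 0
    · simp [h]
    · exact (hA_pd y h).le
  have hAtnn : ∀ y : W, 0 ≤ ⟪At y, y⟫ := fun y => by
    by_cases h : y = 0
    · simp [h]
    · exact (hAt_pd y h).le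
  have hu : A (Ainv v) = v := LinearMap.congr_fun hAinv₁ v
  have hx : At (Atinv (LinearMap.adjoint R v)) = LinearMap.adjoint R v :=
    LinearMap.congr_fun hAtinv₁ _
  simp only [LinearMap.comp_apply]
  generalize Ainv v = u at hu ⊢
  generalize Atinv (LinearMap.adjoint R v) = x at hx ⊢
  have key : ∀ w : W, ⟪At x, w⟫ = ⟪R w, v⟫ := fun w => by
    rw [hx, LinearMap.adjoint_inner_left, real_inner_comm]
  constructor
  · obtain ⟨w, hw, hle⟩ := hS u
    have h := hAtnn (w - cS • x)
    have e1 : ⟪At w, x⟫ = ⟪At x, w⟫ := by rw [hAt_sa, real_inner_comm]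
    simp only [map_sub, map_smul, inner_sub_left, inner_sub_right, real_inner_smul_left,
      real_inner_smul_right, e1, key, hw] at h
    rw [hu, real_inner_comm u v] at hle
    rw [inv_mul_le_iff₀ hcS]
    refine le_of_mul_le_mul_left ?_ hcS
    linarith
  · have h := hAnn (R x - cR • u)
    have e1 : ⟪A (R x), u⟫ = ⟪R x, v⟫ := by rw [hA_sa, hu]
    have e2 : ⟪v, R x⟫ = ⟪R x, v⟫ := real_inner_comm _ _
    have e3 : ⟪v, u⟫ = ⟪u, v⟫ := real_inner_comm _ _
    have h2 := hR x
    rw [key] at h2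
    simp only [map_sub, map_smul, inner_sub_left, inner_sub_right, real_inner_smul_left,
      real_inner_smul_right, hu, e1, e2, e3] at h
    refine le_of_mul_le_mul_left ?_ hcR
    linarith
end

section
/- Let V and V₀ be finite-dimensional real inner product spaces, let A : V → V, A₀ : V₀ → V₀, and D : V → V be self-adjoint positive-definite linear operators, let Π : V₀ → V be linear, and let c_Π, c_D, c₀ > 0 be constants. Assume: (i) ⟨A(Πv₀), Πv₀⟩ ≤ c_Π² ⟨A₀v₀, v₀⟩ for all v₀ ∈ V₀; (ii) ⟨Av, v⟩ ≤ c_D² ⟨Dv, v⟩ for all v ∈ V; (iii) for every v ∈ V there exists v₀ ∈ V₀ with ⟨A₀v₀, v₀⟩ + ⟨D(v − Πv₀), v − Πv₀⟩ ≤ c₀² ⟨Av, v⟩. Then the operator B = D⁻¹ + Π ∘ A₀⁻¹ ∘ Π*, where Π* is the adjoint of Π, satisfies c₀⁻² ⟨A⁻¹v, v⟩ ≤ ⟨Bv, v⟩ ≤ (c_D² + c_Π²) ⟨A⁻¹v, v⟩ for all v ∈ V; in particular the condition number of BA is at most c₀²(c_D² + c_Π²). -/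
open RealInnerProductSpace

theorem aux_quad {W : Type*} [NormedAddCommGroup W] [InnerProductSpace ℝ W]
    (M : W →ₗ[ℝ] W) (hs : ∀ u v : W, ⟪M u, v⟫ = ⟪u, M v⟫)
    (hp : ∀ v : W, v ≠ 0 → 0 < ⟪M v, v⟫) (t : ℝ) (x y : W) :
    2 * t * ⟪M x, y⟫ ≤ t ^ 2 * ⟪M x, x⟫ + ⟪M y, y⟫ := by
  have h : 0 ≤ ⟪M (t • x - y), t • x - y⟫ := by
    by_cases h0 : t • x - y = 0
    · simp [h0]
    · exact (hp _ h0).le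
  have h2 : ⟪M y, x⟫ = ⟪M x, y⟫ := by rw [hs, real_inner_comm]
  simp only [map_sub, map_smul, inner_sub_left, inner_sub_right, real_inner_smul_left,
    real_inner_smul_right, h2] at h
  nlinarith [h]

/-- Auxiliary space lemma (Xu): given self-adjoint positive-definite operators
`A` on `V`, `A₀` on the auxiliary space `V₀`, a smoother `D` on `V`, and a transfer
operator `Π : V₀ → V` satisfying `⟨A(Πv₀), Πv₀⟩ ≤ c_Π² ⟨A₀v₀, v₀⟩`,
`⟨Av, v⟩ ≤ c_D² ⟨Dv, v⟩`, and a stable decomposition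
`⟨A₀v₀, v₀⟩ + ⟨D(v − Πv₀), v − Πv₀⟩ ≤ c₀² ⟨Av, v⟩`, the preconditioner
`B = D⁻¹ + Π ∘ A₀⁻¹ ∘ Π*` satisfies
`c₀⁻² ⟨A⁻¹v, v⟩ ≤ ⟨Bv, v⟩ ≤ (c_D² + c_Π²) ⟨A⁻¹v, v⟩` for all `v`,
so that the condition number of `BA` is at most `c₀²(c_D² + c_Π²)`. -/
theorem auxiliary_space_lemma
    {V V₀ : Type*}
    [NormedAddCommGroup V] [InnerProductSpace ℝ V] [FiniteDimensional ℝ V]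
    [NormedAddCommGroup V₀] [InnerProductSpace ℝ V₀] [FiniteDimensional ℝ V₀]
    (A : V →ₗ[ℝ] V) (A₀ : V₀ →ₗ[ℝ] V₀) (D : V →ₗ[ℝ] V) (Pi : V₀ →ₗ[ℝ] V)
    (cPi cD c₀ : ℝ) (hcPi : 0 < cPi) (hcD : 0 < cD) (hc₀ : 0 < c₀)
    (hA_sa : ∀ u v : V, ⟪A u, v⟫ = ⟪u, A v⟫)
    (hA_pd : ∀ v : V, v ≠ 0 → 0 < ⟪A v, v⟫)
    (hA₀_sa : ∀ u v : V₀, ⟪A₀ u, v⟫ = ⟪u, A₀ v⟫)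
    (hA₀_pd : ∀ v : V₀, v ≠ 0 → 0 < ⟪A₀ v, v⟫)
    (hD_sa : ∀ u v : V, ⟪D u, v⟫ = ⟪u, D v⟫)
    (hD_pd : ∀ v : V, v ≠ 0 → 0 < ⟪D v, v⟫)
    (hPi : ∀ v₀ : V₀, ⟪A (Pi v₀), Pi v₀⟫ ≤ cPi ^ 2 * ⟪A₀ v₀, v₀⟫)
    (hD : ∀ v : V, ⟪A v, v⟫ ≤ cD ^ 2 * ⟪D v, v⟫)
    (hdecomp : ∀ v : V, ∃ v₀ : V₀,
      ⟪A₀ v₀, v₀⟫ + ⟪D (v - Pi v₀), v - Pi v₀⟫ ≤ c₀ ^ 2 * ⟪A v, v⟫)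
    (Ainv : V →ₗ[ℝ] V) (hAinv₁ : A ∘ₗ Ainv = LinearMap.id) (hAinv₂ : Ainv ∘ₗ A = LinearMap.id)
    (A₀inv : V₀ →ₗ[ℝ] V₀) (hA₀inv₁ : A₀ ∘ₗ A₀inv = LinearMap.id)
    (hA₀inv₂ : A₀inv ∘ₗ A₀ = LinearMap.id)
    (Dinv : V →ₗ[ℝ] V) (hDinv₁ : D ∘ₗ Dinv = LinearMap.id) (hDinv₂ : Dinv ∘ₗ D = LinearMap.id) :
    ∀ v : V,
      (c₀ ^ 2)⁻¹ * ⟪Ainv v, v⟫ ≤ ⟪(Dinv + Pi ∘ₗ A₀inv ∘ₗ LinearMap.adjoint Pi) v, v⟫ ∧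
      ⟪(Dinv + Pi ∘ₗ A₀inv ∘ₗ LinearMap.adjoint Pi) v, v⟫ ≤ (cD ^ 2 + cPi ^ 2) * ⟪Ainv v, v⟫ := by
  intro v
  have hA : A (Ainv v) = v := LinearMap.congr_fun hAinv₁ v
  have hDd : D (Dinv v) = v := LinearMap.congr_fun hDinv₁ v
  have hw : A₀ (A₀inv (LinearMap.adjoint Pi v)) = LinearMap.adjoint Pi v :=
    LinearMap.congr_fun hA₀inv₁ _
  simp only [LinearMap.add_apply, LinearMap.comp_apply, inner_add_left]
  generalize Ainv v = a at *
  generalize Dinv v = d at *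
  generalize A₀inv (LinearMap.adjoint Pi v) = w at *
  have e : ∀ x, ⟪A₀ w, x⟫ = ⟪v, Pi x⟫ := fun x => by
    rw [hw, LinearMap.adjoint_inner_left]
  rw [real_inner_comm v a, real_inner_comm v d, real_inner_comm v (Pi w)]
  have key : ∀ c : ℝ, 0 < c → ∀ x, ⟪A x, x⟫ ≤ c ^ 2 * ⟪v, x⟫ → ⟪v, x⟫ ≤ c ^ 2 * ⟪v, a⟫ := by
    intro c hc x hx
    have h := aux_quad A hA_sa hA_pd (c ^ 2) a x
    rw [hA] at h
    have hc2 : 0 < c ^ 2 := by positivity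
    refine le_of_mul_le_mul_left ?_ hc2
    nlinarith [h]
  constructor
  · obtain ⟨v₀, h⟩ := hdecomp a
    have h1 := aux_quad D hD_sa hD_pd (c₀ ^ 2) d (a - Pi v₀)
    have h2 := aux_quad A₀ hA₀_sa hA₀_pd (c₀ ^ 2) w v₀
    rw [e, e] at h2
    rw [hDd, inner_sub_right] at h1
    rw [hA] at h
    have hc2 : 0 < c₀ ^ 2 := by positivity
    rw [inv_mul_le_iff₀ hc2]
    refine le_of_mul_le_mul_left ?_ hc2
    nlinarith [h, h1, h2]
  · have h1 := key cD hcD d (by have := hD d; rwa [hDd] at this)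
    have h2 := key cPi hcPi (Pi w) (by have := hPi w; rwa [e] at this)
    linarith
end

section
/- Let V be a finite-dimensional real vector space with a symmetric positive-definite bilinear form a, and let V_0, V_1, …, V_K be subspaces of V with V_0 + V_1 + ⋯ + V_K = V. For each i, let P_i : V → V_i be the a-orthogonal projection onto V_i, i.e., a(P_i v, w) = a(v, w) for all w ∈ V_i. Then T = Σ_{i=0}^{K} P_i is invertible, and for every v ∈ V, a(T⁻¹v, v) = inf { Σ_{i=0}^{K} a(v_i, v_i) : v_i ∈ V_i for all i and Σ_{i=0}^{K} v_i = v }, where moreover this infimum is attained. -/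
/-- Xu–Zikatanov identity for parallel subspace correction: if `a` is a symmetric
positive-definite bilinear form on a finite-dimensional real vector space `V`,
`V₀, …, V_K` are subspaces with `V₀ + ⋯ + V_K = V`, and `P i` is the
`a`-orthogonal projection onto `V i` (characterized by `P i v ∈ V i` and
`a(P i v, w) = a(v, w)` for all `w ∈ V i`), then `T = Σ_i P i` is invertible and
for every `v`, `a(T⁻¹v, v)` equals the minimum of `Σ_i a(v_i, v_i)` over all
decompositions `v = Σ_i v_i` with `v_i ∈ V i`, the infimum being attained. -/
theorem subspace_correction_identity {V : Type*} [AddCommGroup V] [Module ℝ V]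
    [FiniteDimensional ℝ V]
    (a : V →ₗ[ℝ] V →ₗ[ℝ] ℝ)
    (hsymm : ∀ u v : V, a u v = a v u)
    (hpos : ∀ v : V, v ≠ 0 → 0 < a v v)
    (K : ℕ) (Vsub : Fin (K + 1) → Submodule ℝ V)
    (hsum : (⨆ i, Vsub i) = ⊤)
    (P : Fin (K + 1) → V →ₗ[ℝ] V)
    (hPmem : ∀ i (v : V), P i v ∈ Vsub i)
    (hPproj : ∀ i (v w : V), w ∈ Vsub i → a (P i v) w = a v w) :
    Function.Bijective (∑ i, P i) ∧
      ∀ v w : V, (∑ i, P i) w = v →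
        IsLeast
          {s : ℝ | ∃ vi : Fin (K + 1) → V,
            (∀ i, vi i ∈ Vsub i) ∧ (∑ i, vi i) = v ∧ s = ∑ i, a (vi i) (vi i)}
          (a w v) := by
  have hnn : ∀ v : V, 0 ≤ a v v := by
    intro v
    by_cases h : v = 0
    · simp [h]
    · exact (hpos v h).le
  have hkey : ∀ w : V, a w ((∑ i, P i) w) = ∑ i, a (P i w) (P i w) := by
    intro w
    rw [LinearMap.sum_apply, map_sum]
    exact Finset.sum_congr rfl fun i _ => (hPproj i w _ (hPmem i w)).symm
  have hinj : Function.Injective (∑ i, P i : V →ₗ[ℝ] V) := by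
    rw [injective_iff_map_eq_zero]
    intro w hw
    have h0 := hkey w
    rw [hw, map_zero] at h0
    have h1 := (Finset.sum_eq_zero_iff_of_nonneg (fun i _ => hnn (P i w))).1 h0.symm
    have h2 : ∀ i, P i w = 0 := by
      intro i
      by_contra h
      exact (hpos _ h).ne' (h1 i (Finset.mem_univ i))
    have h3 : (⨆ i, Vsub i) ≤ LinearMap.ker (a w) := by
      refine iSup_le fun i u hu => ?_
      rw [LinearMap.mem_ker, ← hPproj i w u hu, h2 i]
      simp
    rw [hsum] at h3
    by_contra h
    exact (hpos w h).ne' (LinearMap.mem_ker.1 (h3 Submodule.mem_top))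
  have hcoe : (∑ i, (P i : V → V)) = ((∑ i, P i : V →ₗ[ℝ] V) : V → V) := by
    funext x
    rw [LinearMap.sum_apply, Finset.sum_apply]
  refine ⟨?_, ?_⟩
  · rw [hcoe]
    exact ⟨hinj, LinearMap.injective_iff_surjective.1 hinj⟩
  intro v w hw
  constructor
  · refine ⟨fun i => P i w, fun i => hPmem i w, ?_, ?_⟩
    · rw [← hw, LinearMap.sum_apply]
    · rw [← hw, hkey]
  · rintro s ⟨vi, hvi, hv, rfl⟩
    have h1 : 0 ≤ ∑ i, a (vi i - P i w) (vi i - P i w) :=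
      Finset.sum_nonneg fun i _ => hnn _
    have h2 : ∀ i, a (vi i - P i w) (vi i - P i w)
        = a (vi i) (vi i) - 2 * a w (vi i) + a (P i w) (P i w) := by
      intro i
      have e1 := hPproj i w (vi i) (hvi i)
      have e2 := hsymm (vi i) (P i w)
      simp only [map_sub, LinearMap.sub_apply]
      linarith
    simp only [h2, Finset.sum_add_distrib, Finset.sum_sub_distrib, ← Finset.mul_sum] at h1
    rw [← hkey, hw, ← map_sum, hv] at h1
    linarith
end
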